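/- Let Y be a Banach space containing a normalized, symmetric basic sequence (y_n) which is not equivalent to the unit vector basis of ℓ_1. Then there exist an admissible sequence w and a bounded linear operator T from d_*(w) into Y such that T e_n = y_n for every n ∈ ℕ, where (e_n) is the unit vector basis of d_*(w). -/

import Mathlib

open Filter Topology

/-- `rearrSum x n = ∑_{k=1}^n x̃_k`, the sum of the `n` largest values of `(|x_k|)`,
i.e. the `n`-th partial sum of the nonincreasing rearrangement of `(|x_k|)`; it is the
supremum of `∑_{k ∈ A} |x_k|` over finite sets `A ⊆ ℕ` of cardinality `n`. -/
noncomputable def rearrSum (x : ℕ → ℝ) (n : ℕ) : ℝ :=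
  sSup ((fun A : Finset ℕ => ∑ k ∈ A, |x k|) '' {A : Finset ℕ | A.card = n})

/-- A sequence of positive reals is admissible if it is nonincreasing, starts at `1`,
tends to `0` and is not summable. -/
def Admissible (w : ℕ → ℝ) : Prop :=
  (∀ n, 0 < w n) ∧ (∀ n, w (n + 1) ≤ w n) ∧ w 0 = 1 ∧
    Tendsto w atTop (𝓝 0) ∧ ¬ Summable w

/-- The underlying set of sequences of `d_*(w)`: sequences `x ∈ c₀` with
`(∑_{k=1}^n x̃_k) / (∑_{k=1}^n w_k) → 0`. -/
def dStarSet (w : ℕ → ℝ) : Set (ℕ → ℝ) :=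
  {x | Tendsto x atTop (𝓝 0) ∧
    Tendsto (fun n => rearrSum x n / ∑ k ∈ Finset.range n, w k) atTop (𝓝 0)}

/-- The norm of `d_*(w)`: `‖x‖ = sup_n (∑_{k=1}^n x̃_k) / (∑_{k=1}^n w_k)`. -/
noncomputable def dStarNorm (w : ℕ → ℝ) (x : ℕ → ℝ) : ℝ :=
  ⨆ n : ℕ, rearrSum x n / ∑ k ∈ Finset.range n, w k

/-- A normed space `D` is a representation of `d_*(w)` if there is a linear bijection `j`
from `D` onto the set of sequences of `d_*(w)` carrying the norm of `D` to the norm of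
`d_*(w)`; i.e. `D` "is" the space `d_*(w)` endowed with its canonical norm. -/
def IsDStarRep (w : ℕ → ℝ) (D : Type*) [NormedAddCommGroup D] [NormedSpace ℝ D]
    (j : D →ₗ[ℝ] (ℕ → ℝ)) : Prop :=
  Function.Injective j ∧ Set.range j = dStarSet w ∧ ∀ x : D, ‖x‖ = dStarNorm w (j x)

/-- `(y n)` is a basic sequence: it is a Schauder basis of the closed linear span of its
range, i.e. every element of that closed span has a unique representation as a norm
convergent series `∑ aₖ yₖ`. -/
def IsBasicSeq {Y : Type*} [NormedAddCommGroup Y] [NormedSpace ℝ Y] (y : ℕ → Y) : Prop :=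
  ∀ x ∈ closure ((Submodule.span ℝ (Set.range y) : Submodule ℝ Y) : Set Y),
    ∃! a : ℕ → ℝ,
      Filter.Tendsto (fun n => ∑ k ∈ Finset.range n, a k • y k) Filter.atTop (nhds x)

/-- Two sequences are equivalent if a series `∑ aₖ yₖ` converges exactly when the
series `∑ aₖ zₖ` converges. -/
def SeqEquivalent {Y Z : Type*} [NormedAddCommGroup Y] [NormedSpace ℝ Y]
    [NormedAddCommGroup Z] [NormedSpace ℝ Z] (y : ℕ → Y) (z : ℕ → Z) : Prop :=
  ∀ a : ℕ → ℝ,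
    (∃ x : Y, Filter.Tendsto (fun n => ∑ k ∈ Finset.range n, a k • y k)
      Filter.atTop (nhds x)) ↔
    (∃ x : Z, Filter.Tendsto (fun n => ∑ k ∈ Finset.range n, a k • z k)
      Filter.atTop (nhds x))

/-- `(y n)` is a symmetric basic sequence: it is basic and every permutation of it is a
basic sequence equivalent to it. -/
def IsSymmetricBasicSeq {Y : Type*} [NormedAddCommGroup Y] [NormedSpace ℝ Y]
    (y : ℕ → Y) : Prop :=
  IsBasicSeq y ∧ ∀ σ : Equiv.Perm ℕ, IsBasicSeq (y ∘ σ) ∧ SeqEquivalent (y ∘ σ) y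

/-- `(y n)` is equivalent to the unit vector basis of `ℓ₁`: there is `c > 0` with
`‖∑ aₖ yₖ‖ ≥ c ∑ |aₖ|` for all finitely supported scalars. -/
def EquivL1UnitBasis {Y : Type*} [NormedAddCommGroup Y] [NormedSpace ℝ Y]
    (y : ℕ → Y) : Prop :=
  ∃ c : ℝ, 0 < c ∧ ∀ (n : ℕ) (a : ℕ → ℝ),
    c * ∑ k ∈ Finset.range n, |a k| ≤ ‖∑ k ∈ Finset.range n, a k • y k‖

/-- A normalized sequence `(y n)` has upper `p`-estimates if there is `C > 0` with
`‖∑_{k=1}^n aₖ yₖ‖ ≤ C (∑_{k=1}^n |aₖ|^p)^(1/p)` for all `n` and all scalars. -/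
def HasUpperPEstimates {Y : Type*} [NormedAddCommGroup Y] [NormedSpace ℝ Y]
    (p : ℝ) (y : ℕ → Y) : Prop :=
  ∃ C : ℝ, 0 < C ∧ ∀ (n : ℕ) (a : ℕ → ℝ),
    ‖∑ k ∈ Finset.range n, a k • y k‖ ≤
      C * (∑ k ∈ Finset.range n, |a k| ^ p) ^ (1 / p)

/-!
By the duality between `d_*(w)` and the Lorentz space `d(w, 1)`, a bound for `‖∑ aₖ yₖ‖` by a
multiple of the norm of `a` in `d_*(w)` amounts to a bound `∑ wₖ |f (y_{g(k)})| ≤ C` for all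
permutations `g` and all `f` in the dual unit ball.

The open mapping theorem and the Banach–Steinhaus theorem give a basis constant and a constant
for each single permutation, and a gliding hump makes the latter uniform. Hence
`∑ |aₖ| |f (y_{g(k)})| ≤ K ‖∑ aₖ yₖ‖` with `K` independent of `a`, `f` and `g`. If `y` is not
equivalent to the basis of `ℓ₁`, some `a` supported on `{0, …, N - 1}` has `‖∑ aₖ yₖ‖` much smaller
than `∑ |aₖ|`, and averaging over the cyclic shifts of `{0, …, N - 1}` shows that the mean of
`|f (y_{g(0)})|, …, |f (y_{g(N - 1)})|` is at most `ε`, uniformly in `f` and `g`. Let `N j` be such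
an `N` for `ε = 2⁻ʲ`. The weight `∑ⱼ (N j)⁻¹ 1_{[0, N j)}`, divided by its value at `0`, satisfies
the required bound. It tends to zero since `(N j)⁻¹ ≤ 2⁻ʲ`, and is not summable since each of its
infinitely many terms has mass one.
-/

open scoped BoundedContinuousFunction

section BasicSequence

variable {Y Z : Type*} [NormedAddCommGroup Y] [NormedSpace ℝ Y]
  [NormedAddCommGroup Z] [NormedSpace ℝ Z] {y : ℕ → Y}

/-- The space of convergent series `∑ aₖ yₖ`, each encoded as the pair of its sequence of partial
sums and its sum, under the sup norm. -/
def convergentSeries (y : ℕ → Y) : Submodule ℝ ((ℕ →ᵇ Y) × Y) where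
  carrier := {p | (∃ a : ℕ → ℝ, ∀ n, p.1 n = ∑ k ∈ Finset.range n, a k • y k) ∧
    Tendsto p.1 atTop (𝓝 p.2)}
  add_mem' := by
    rintro p q ⟨⟨a, ha⟩, hp⟩ ⟨⟨b, hb⟩, hq⟩
    exact ⟨⟨a + b, fun n => by simp [ha, hb, add_smul, Finset.sum_add_distrib]⟩, hp.add hq⟩
  zero_mem' := ⟨⟨0, by simp⟩, tendsto_const_nhds⟩
  smul_mem' := by
    rintro c p ⟨⟨a, ha⟩, hp⟩
    exact ⟨⟨c • a, fun n => by simp [ha, mul_smul, Finset.smul_sum]⟩, hp.const_smul c⟩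

theorem exists_forall_eq_sum_smul_iff {S : ℕ → Y} :
    (∃ a : ℕ → ℝ, ∀ n, S n = ∑ k ∈ Finset.range n, a k • y k) ↔
      S 0 = 0 ∧ ∀ n, S (n + 1) - S n ∈ Submodule.span ℝ {y n} := by
  simp only [Submodule.mem_span_singleton]
  constructor
  · rintro ⟨a, ha⟩
    exact ⟨by simp [ha], fun n => ⟨a n, by simp [ha, Finset.sum_range_succ]⟩⟩
  · rintro ⟨h0, h⟩
    choose a ha using h
    refine ⟨a, fun n => ?_⟩
    rw [Finset.sum_congr rfl fun k _ => ha k, Finset.sum_range_sub, h0, sub_zero]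

theorem isClosed_convergentSeries (y : ℕ → Y) :
    IsClosed (convergentSeries y : Set ((ℕ →ᵇ Y) × Y)) := by
  have continuous_partialSum (n : ℕ) : Continuous fun p : (ℕ →ᵇ Y) × Y => p.1 n :=
    (BoundedContinuousFunction.evalCLM ℝ n).continuous.comp continuous_fst
  refine IsClosed.inter (s₁ := {p : (ℕ →ᵇ Y) × Y |
    ∃ a : ℕ → ℝ, ∀ n, p.1 n = ∑ k ∈ Finset.range n, a k • y k}) ?_ ?_
  · simp only [exists_forall_eq_sum_smul_iff, Set.ofPred_and, Set.ofPred_forall]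
    refine (isClosed_eq (continuous_partialSum 0) continuous_const).inter (isClosed_iInter fun n =>
      (Submodule.closed_of_finiteDimensional (Submodule.span ℝ {y n})).preimage
        ((continuous_partialSum (n + 1)).sub (continuous_partialSum n)))
  · refine IsSeqClosed.isClosed fun u p hu hup => ?_
    have hunif := BoundedContinuousFunction.tendsto_iff_tendstoUniformly.1
      ((continuous_fst.tendsto p).comp hup)
    exact (hunif.tendstoUniformlyOnFilter.mono_right
      (le_top : (atTop : Filter ℕ) ≤ ⊤)).tendsto_of_eventually_tendsto
        (Eventually.of_forall hu) ((continuous_snd.tendsto p).comp hup)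

theorem exists_mem_convergentSeries {a : ℕ → ℝ} {x : Y}
    (hx : Tendsto (fun n => ∑ k ∈ Finset.range n, a k • y k) atTop (𝓝 x)) :
    ∃ p ∈ convergentSeries y, p.2 = x := by
  obtain ⟨C, hC⟩ := isBounded_iff_forall_norm_le.1 (Metric.isBounded_range_of_tendsto _ hx)
  let S : ℕ →ᵇ Y := BoundedContinuousFunction.ofNormedAddCommGroupDiscrete
    (fun n => ∑ k ∈ Finset.range n, a k • y k) C (Set.forall_mem_range.1 hC)
  exact ⟨(S, x), ⟨⟨a, fun _ => rfl⟩, hx⟩, rfl⟩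

theorem sum_smul_mem_span_range (s : Finset ℕ) (a : ℕ → ℝ) :
    ∑ k ∈ s, a k • y k ∈ Submodule.span ℝ (Set.range y) :=
  Submodule.sum_mem _ fun k _ => Submodule.smul_mem _ _ (Submodule.subset_span ⟨k, rfl⟩)

theorem mem_topologicalClosure_span_range_of_tendsto {a : ℕ → ℝ} {x : Y}
    (hx : Tendsto (fun n => ∑ k ∈ Finset.range n, a k • y k) atTop (𝓝 x)) :
    x ∈ (Submodule.span ℝ (Set.range y)).topologicalClosure :=
  mem_closure_of_tendsto hx (Eventually.of_forall fun _ => sum_smul_mem_span_range _ a)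

theorem tendsto_sum_single_smul (y : ℕ → Y) (j : ℕ) :
    Tendsto (fun n => ∑ k ∈ Finset.range n, (Pi.single j 1 : ℕ → ℝ) k • y k) atTop (𝓝 (y j)) := by
  refine tendsto_const_nhds.congr' ((eventually_gt_atTop j).mono fun n hn => ?_)
  simp [Pi.single_apply, hn]

namespace IsBasicSeq

theorem eq_of_tendsto (hy : IsBasicSeq y) {a b : ℕ → ℝ} {x : Y}
    (ha : Tendsto (fun n => ∑ k ∈ Finset.range n, a k • y k) atTop (𝓝 x))
    (hb : Tendsto (fun n => ∑ k ∈ Finset.range n, b k • y k) atTop (𝓝 x)) : a = b :=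
  (hy x (mem_topologicalClosure_span_range_of_tendsto ha)).unique ha hb

theorem ne_zero (hy : IsBasicSeq y) (k : ℕ) : y k ≠ 0 := fun hk => by
  have := hy.eq_of_tendsto (a := 0) (x := 0) (by simp) (hk ▸ tendsto_sum_single_smul y k)
  simpa using congr_fun this k

/-- The sum map is a bijection of Banach spaces, so its inverse, which gives the partial sums, is
continuous. -/
theorem exists_partialSums [CompleteSpace Y] (hy : IsBasicSeq y) :
    ∃ e : (Submodule.span ℝ (Set.range y)).topologicalClosure ≃L[ℝ] convergentSeries y,
      ∀ x, (e x).1.2 = x := by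
  have : CompleteSpace (convergentSeries y) := (isClosed_convergentSeries y).completeSpace_coe
  let L : convergentSeries y →L[ℝ] (Submodule.span ℝ (Set.range y)).topologicalClosure :=
    ((ContinuousLinearMap.snd ℝ (ℕ →ᵇ Y) Y).comp (convergentSeries y).subtypeL).codRestrict _
      fun ⟨p, ⟨a, ha⟩, hp⟩ => mem_topologicalClosure_span_range_of_tendsto (a := a) (by
        simpa only [← ha])
  have injective_L : Function.Injective L := by
    rintro ⟨p, ⟨a, ha⟩, hp⟩ ⟨q, ⟨b, hb⟩, hq⟩ hpq
    have hpq : p.2 = q.2 := congr_arg Subtype.val hpq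
    have hab : a = b := hy.eq_of_tendsto (x := p.2) (by simpa only [← ha])
      (by simpa only [← hb, hpq])
    exact Subtype.ext (Prod.ext (by ext n; rw [ha, hb, hab]) hpq)
  have surjective_L : Function.Surjective L := fun ⟨x, hx⟩ => by
    obtain ⟨a, ha, -⟩ := hy x hx
    obtain ⟨p, hp, hpx⟩ := exists_mem_convergentSeries ha
    exact ⟨⟨p, hp⟩, Subtype.ext hpx⟩
  let e := ContinuousLinearEquiv.ofBijective L (LinearMap.ker_eq_bot.2 injective_L)
    (LinearMap.range_eq_top.2 surjective_L)
  exact ⟨e.symm, fun x => congr_arg Subtype.val (e.apply_symm_apply x)⟩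

theorem exists_continuous_coord [CompleteSpace Y] (hy : IsBasicSeq y) :
    ∃ c : ℕ → StrongDual ℝ (Submodule.span ℝ (Set.range y)).topologicalClosure,
      ∀ x, Tendsto (fun n => ∑ k ∈ Finset.range n, c k x • y k) atTop (𝓝 (x : Y)) := by
  obtain ⟨e, he⟩ := hy.exists_partialSums
  choose f hf using fun k => SeparatingDual.exists_eq_one (R := ℝ) (hy.ne_zero k)
  let partialSum (n : ℕ) := (BoundedContinuousFunction.evalCLM ℝ n).comp
    ((ContinuousLinearMap.fst ℝ (ℕ →ᵇ Y) Y).comp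
      ((convergentSeries y).subtypeL.comp e.toContinuousLinearMap))
  refine ⟨fun k => (f k).comp (partialSum (k + 1) - partialSum k), fun x => ?_⟩
  obtain ⟨⟨a, ha⟩, hx⟩ := (e x).2
  have partialSum_apply (n : ℕ) : partialSum n x = ∑ k ∈ Finset.range n, a k • y k := ha n
  have coord_eq (k : ℕ) : (f k).comp (partialSum (k + 1) - partialSum k) x = a k := by
    rw [ContinuousLinearMap.comp_apply, sub_apply, partialSum_apply,
      partialSum_apply, Finset.sum_range_succ_sub_sum, map_smul, hf, smul_eq_mul, mul_one]
  simpa only [coord_eq, ← ha, he] using hx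

theorem exists_schauderBasis [CompleteSpace Y] (hy : IsBasicSeq y) :
    ∃ b : SchauderBasis ℝ (Submodule.span ℝ (Set.range y)).topologicalClosure,
      ∀ k, (b k : Y) = y k := by
  obtain ⟨c, hc⟩ := hy.exists_continuous_coord
  let v (k : ℕ) : (Submodule.span ℝ (Set.range y)).topologicalClosure :=
    ⟨y k, subset_closure (Submodule.subset_span ⟨k, rfl⟩)⟩
  refine ⟨⟨v, c, fun i j => ?_, fun x => ?_⟩, fun k => rfl⟩
  · exact (congr_fun (hy.eq_of_tendsto (hc (v j)) (tendsto_sum_single_smul y j)) i).trans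
      (by congr!)
  · rw [HasSum, SummationFilter.conditional_filter_eq_map_range, tendsto_map'_iff,
      tendsto_subtype_rng]
    simpa [Function.comp_def, v] using hc x

theorem exists_norm_sum_smul_le_of_tendsto [CompleteSpace Y] (hy : IsBasicSeq y) {z : ℕ → Z}
    (h : ∀ a : ℕ → ℝ, (∃ x, Tendsto (fun n => ∑ k ∈ Finset.range n, a k • y k) atTop (𝓝 x)) →
      ∃ x, Tendsto (fun n => ∑ k ∈ Finset.range n, a k • z k) atTop (𝓝 x)) :
    ∃ C, ∀ (s : Finset ℕ) (a : ℕ → ℝ), ‖∑ k ∈ s, a k • z k‖ ≤ C * ‖∑ k ∈ s, a k • y k‖ := by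
  obtain ⟨b, hb⟩ := hy.exists_schauderBasis
  let T (n : ℕ) : (Submodule.span ℝ (Set.range y)).topologicalClosure →L[ℝ] Z :=
    ∑ k ∈ Finset.range n, (b.coord k).smulRight (z k)
  have T_apply (n : ℕ) (x) : T n x = ∑ k ∈ Finset.range n, b.coord k x • z k := by simp [T]
  have bounded_T (x) : ∃ C, ∀ n, ‖T n x‖ ≤ C := by
    have tendsto_proj := (continuous_subtype_val.tendsto x).comp (b.tendsto_proj x)
    obtain ⟨w, hw⟩ := h (fun k => b.coord k x) ⟨x, by
      simpa [Function.comp_def, hb] using tendsto_proj⟩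
    obtain ⟨C, hC⟩ := isBounded_iff_forall_norm_le.1 (Metric.isBounded_range_of_tendsto _ hw)
    exact ⟨C, fun n => T_apply n x ▸ hC _ ⟨n, rfl⟩⟩
  have : CompleteSpace (Submodule.span ℝ (Set.range y)).topologicalClosure :=
    (Submodule.isClosed_topologicalClosure _).completeSpace_coe
  obtain ⟨C, hC⟩ := banach_steinhaus bounded_T
  refine ⟨C, fun s a => ?_⟩
  obtain ⟨n, hn⟩ := s.exists_nat_subset_range
  have T_sum : T n (∑ k ∈ s, a k • b k) = ∑ k ∈ s, a k • z k := by
    simp [T_apply, b.ortho, Pi.single_apply, Finset.sum_ite_mem, Finset.inter_eq_right.2 hn]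
  simpa [T_sum, hb] using (T n).le_of_opNorm_le (hC n) (∑ k ∈ s, a k • b k)

end IsBasicSeq

/-- The projections `∑ aₖ yₖ ↦ ∑_{k < m} aₖ yₖ` of the linear span of `y` have norm at most `M`. -/
def HasBasisConst (y : ℕ → Y) (M : ℝ) : Prop :=
  0 ≤ M ∧ ∀ (s : Finset ℕ) (a : ℕ → ℝ) (m : ℕ),
    ‖∑ k ∈ s with k < m, a k • y k‖ ≤ M * ‖∑ k ∈ s, a k • y k‖

theorem IsBasicSeq.exists_hasBasisConst [CompleteSpace Y] (hy : IsBasicSeq y) :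
    ∃ M, HasBasisConst y M := by
  obtain ⟨b, hb⟩ := hy.exists_schauderBasis
  have : CompleteSpace (Submodule.span ℝ (Set.range y)).topologicalClosure :=
    (Submodule.isClosed_topologicalClosure _).completeSpace_coe
  obtain ⟨M, hM⟩ := b.exists_norm_proj_le
  refine ⟨M, (norm_nonneg _).trans (hM 0), fun s a m => ?_⟩
  have proj_sum : b.proj m (∑ k ∈ s, a k • b k) = ∑ k ∈ s with k < m, a k • b k := by
    simp only [map_sum, map_smul, b.proj_apply_basis_mem, smul_ite, smul_zero, Finset.sum_filter]
  simpa [proj_sum, hb] using (b.proj m).le_of_opNorm_le (hM m) (∑ k ∈ s, a k • b k)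

theorem HasBasisConst.norm_smul_le {M : ℝ} (hM : HasBasisConst y M) {s : Finset ℕ} {k : ℕ}
    (hk : k ∈ s) (a : ℕ → ℝ) : ‖a k • y k‖ ≤ 2 * M * ‖∑ i ∈ s, a i • y i‖ := by
  have hfilter : s.filter (· < k + 1) = insert k (s.filter (· < k)) := by
    ext i
    simp only [Finset.mem_filter, Finset.mem_insert]
    grind
  have hdiff : a k • y k =
      ∑ i ∈ s with i < k + 1, a i • y i - ∑ i ∈ s with i < k, a i • y i := by
    rw [hfilter, Finset.sum_insert (by simp), add_sub_cancel_right]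
  rw [hdiff]
  linarith [norm_sub_le (∑ i ∈ s with i < k + 1, a i • y i) (∑ i ∈ s with i < k, a i • y i),
    hM.2 s a (k + 1), hM.2 s a k]

end BasicSequence

section PartialInjection

variable {α ι : Type*}

theorem exists_perm_subtype_eqOn [DecidableEq α] (s : Finset α) {f : α → α} (hf : Set.InjOn f s) :
    ∃ e : Equiv.Perm ((s ∪ s.image f : Finset α) : Set α), ∀ x, x.1 ∈ s → (e x : α) = f x := by
  refine Set.MapsTo.exists_equiv_extend_of_card_eq
    (α := ((s ∪ s.image f : Finset α) : Set α)) (t := s ∪ s.image f) (s := {x | x.1 ∈ s})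
    (f := fun x => f x) (by simp) (fun x hx => ?_) fun x hx z hz h => Subtype.ext (hf hx hz h)
  exact Finset.mem_union_right _ (Finset.mem_image_of_mem f hx)

theorem exists_perm_eqOn_of_pairwise_disjoint [DecidableEq α] {s : ι → Finset α}
    {f : ι → α → α} (hf : ∀ i, Set.InjOn (f i) (s i))
    (hs : Pairwise fun i j => Disjoint (s i ∪ (s i).image (f i)) (s j ∪ (s j).image (f j))) :
    ∃ σ : Equiv.Perm α, ∀ i, Set.EqOn σ (f i) (s i) := by
  classical
  choose e he using fun i => exists_perm_subtype_eqOn (s i) (hf i)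
  let u := Set.unionEqSigmaOfDisjoint fun i j hij => Finset.disjoint_coe.2 (hs hij)
  refine ⟨Equiv.Perm.extendDomain (Equiv.sigmaCongrRight e) u.symm, fun i x hx => ?_⟩
  have hxi : x ∈ s i ∪ (s i).image (f i) := Finset.mem_union_left _ hx
  exact (Equiv.Perm.extendDomain_apply_image _ u.symm ⟨i, x, hxi⟩).trans (he i ⟨x, hxi⟩ hx)

theorem exists_perm_eqOn {s : Finset α} {f : α → α} (hf : Set.InjOn f s) :
    ∃ σ : Equiv.Perm α, Set.EqOn σ f s := by
  classical
  obtain ⟨σ, hσ⟩ := exists_perm_eqOn_of_pairwise_disjoint (ι := Unit) (fun _ => hf)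
    (fun i j hij => absurd (Subsingleton.elim i j) hij)
  exact ⟨σ, hσ ()⟩

end PartialInjection

section SymmetricConst

variable {Y ι : Type*} [NormedAddCommGroup Y] [NormedSpace ℝ Y] {y : ι → Y}

/-- The operators `∑ aₖ yₖ ↦ ∑ aₖ y_{g(k)}` on the linear span of `y`, for `g` a permutation of the
index set, have norm at most `C`. -/
def HasSymmetricConst (y : ι → Y) (C : ℝ) : Prop :=
  0 ≤ C ∧ ∀ (s : Finset ι) (a : ι → ℝ) (g : Equiv.Perm ι),
    ‖∑ k ∈ s, a k • y (g k)‖ ≤ C * ‖∑ k ∈ s, a k • y k‖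

theorem norm_sum_smul_le_card_mul {s : Finset ι} {a : ι → ℝ} {z : ι → Y} {B : ℝ}
    (hz : ∀ k, ‖z k‖ = 1) (ha : ∀ k ∈ s, |a k| ≤ B) : ‖∑ k ∈ s, a k • z k‖ ≤ s.card * B := by
  refine (norm_sum_le_of_le s fun k hk => ?_).trans_eq (by rw [Finset.sum_const, nsmul_eq_mul])
  rw [norm_smul, hz, mul_one]
  exact ha k hk

theorem card_filter_mem_or_apply_mem_le [DecidableEq ι] (s F : Finset ι) (g : Equiv.Perm ι) :
    (s.filter fun k => k ∈ F ∨ g k ∈ F).card ≤ 2 * F.card := by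
  have hsub : (s.filter fun k => k ∈ F ∨ g k ∈ F) ⊆ F ∪ F.image g.symm := fun k hk => by
    simp only [Finset.mem_filter, Finset.mem_union, Finset.mem_image] at hk ⊢
    exact hk.2.imp_right fun h => ⟨g k, h, g.symm_apply_apply k⟩
  calc (s.filter fun k => k ∈ F ∨ g k ∈ F).card
      ≤ F.card + (F.image g.symm).card :=
        (Finset.card_le_card hsub).trans (Finset.card_union_le _ _)
    _ ≤ 2 * F.card := by linarith [Finset.card_image_le (s := F) (f := g.symm)]

/-- Only the at most `2 * F.card` indices `k` with `k ∈ F` or `g k ∈ F` are not covered by the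
hypothesis, and their contribution is controlled by the bound on single terms. -/
theorem exists_hasSymmetricConst_of_disjoint [DecidableEq ι] {B C : ℝ} (hy : ∀ k, ‖y k‖ = 1)
    (hB : ∀ (s : Finset ι) (a : ι → ℝ), ∀ k ∈ s, |a k| ≤ B * ‖∑ i ∈ s, a i • y i‖)
    (F : Finset ι)
    (hC : ∀ (s : Finset ι) (a : ι → ℝ) (g : Equiv.Perm ι), Disjoint F (s ∪ s.image g) →
      ‖∑ k ∈ s, a k • y (g k)‖ ≤ C * ‖∑ k ∈ s, a k • y k‖) :
    ∃ C', HasSymmetricConst y C' := by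
  refine ⟨|C| * (1 + 2 * F.card * |B|) + 2 * F.card * |B|, by positivity, fun s a g => ?_⟩
  set X := ‖∑ k ∈ s, a k • y k‖
  let R := s.filter fun k => k ∈ F ∨ g k ∈ F
  let S := s.filter fun k => ¬(k ∈ F ∨ g k ∈ F)
  have card_R : (R.card : ℝ) ≤ 2 * F.card := mod_cast card_filter_mem_or_apply_mem_le s F g
  have sum_R_le (z : ι → Y) (hz : ∀ k, ‖z k‖ = 1) :
      ‖∑ k ∈ R, a k • z k‖ ≤ 2 * F.card * |B| * X := by
    calc ‖∑ k ∈ R, a k • z k‖ ≤ R.card * (|B| * X) :=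
          norm_sum_smul_le_card_mul hz fun k hk =>
            (hB s a k (Finset.mem_of_mem_filter k hk)).trans (by gcongr; exact le_abs_self B)
      _ ≤ 2 * F.card * (|B| * X) := by gcongr
      _ = 2 * F.card * |B| * X := by ring
  have sum_R_add_sum_S (z : ι → Y) :
      ∑ k ∈ R, a k • z k + ∑ k ∈ S, a k • z k = ∑ k ∈ s, a k • z k :=
    Finset.sum_filter_add_sum_filter_not _ _ _
  have disjoint_S : Disjoint F (S ∪ S.image g) := by
    simp only [Finset.disjoint_right, Finset.mem_union, Finset.mem_image, S, Finset.mem_filter]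
    rintro _ (hk | ⟨k, hk, rfl⟩)
    exacts [fun h => hk.2 (.inl h), fun h => hk.2 (.inr h)]
  have sum_S_le : ‖∑ k ∈ S, a k • y k‖ ≤ (1 + 2 * F.card * |B|) * X := by
    have := norm_sub_le (∑ k ∈ s, a k • y k) (∑ k ∈ R, a k • y k)
    rw [← sum_R_add_sum_S y, add_sub_cancel_left, sum_R_add_sum_S y] at this
    linarith [sum_R_le y hy]
  calc ‖∑ k ∈ s, a k • y (g k)‖
      ≤ ‖∑ k ∈ R, a k • y (g k)‖ + ‖∑ k ∈ S, a k • y (g k)‖ := by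
        rw [← sum_R_add_sum_S fun k => y (g k)]
        exact norm_add_le _ _
    _ ≤ 2 * F.card * |B| * X + |C| * ((1 + 2 * F.card * |B|) * X) :=
        add_le_add (sum_R_le _ fun k => hy (g k)) <|
          (hC S a g disjoint_S).trans (mul_le_mul (le_abs_self C) sum_S_le (by positivity)
            (by positivity))
    _ = _ := by ring

/-- A failure of uniformity persists off every finite set, so permutations with worse and worse
constants can be found on disjoint finite sets and glued to one unbounded permutation. -/
theorem exists_hasSymmetricConst {B : ℝ} (hy : ∀ k, ‖y k‖ = 1)
    (hB : ∀ (s : Finset ι) (a : ι → ℝ), ∀ k ∈ s, |a k| ≤ B * ‖∑ i ∈ s, a i • y i‖)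
    (hσ : ∀ σ : Equiv.Perm ι, ∃ C, ∀ (s : Finset ι) (a : ι → ℝ),
      ‖∑ k ∈ s, a k • y (σ k)‖ ≤ C * ‖∑ k ∈ s, a k • y k‖) :
    ∃ C, HasSymmetricConst y C := by
  classical
  by_contra! hne
  have exists_violation (C : ℕ) (F : Finset ι) : ∃ (s : Finset ι) (g : Equiv.Perm ι),
      (∃ a : ι → ℝ, C * ‖∑ k ∈ s, a k • y k‖ < ‖∑ k ∈ s, a k • y (g k)‖) ∧
        Disjoint F (s ∪ s.image g) := by
    by_contra! h
    obtain ⟨C', hC'⟩ := exists_hasSymmetricConst_of_disjoint (C := C) hy hB F fun s a g hF =>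
      not_lt.1 fun hlt => h s g ⟨a, hlt⟩ hF
    exact hne C' hC'
  obtain ⟨v, violates, spread⟩ := exists_seq_of_forall_finset_exists
    (fun v : ℕ × Finset ι × Equiv.Perm ι => ∃ a : ι → ℝ,
      v.1 * ‖∑ k ∈ v.2.1, a k • y k‖ < ‖∑ k ∈ v.2.1, a k • y (v.2.2 k)‖)
    (fun v w => v.1 < w.1 ∧ Disjoint (v.2.1 ∪ v.2.1.image v.2.2) (w.2.1 ∪ w.2.1.image w.2.2))
    fun V _ => by
      obtain ⟨s, g, hsg, hdisj⟩ := exists_violation (V.sup (fun v => v.1) + 1)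
        (V.biUnion fun v => v.2.1 ∪ v.2.1.image v.2.2)
      exact ⟨⟨_, s, g⟩, hsg, fun v hv => ⟨Nat.lt_succ_of_le (Finset.le_sup (f := fun v => v.1) hv),
        (Finset.disjoint_biUnion_left _ _ _).1 hdisj v hv⟩⟩
  obtain ⟨σ, hσv⟩ := exists_perm_eqOn_of_pairwise_disjoint (f := fun n => (v n).2.2)
    (fun n => (v n).2.2.injective.injOn)
    ((pairwise_disjoint_on _).2 fun m n hmn => (spread m n hmn).2)
  obtain ⟨C, hC⟩ := hσ σ
  obtain ⟨n, hn⟩ := exists_nat_ge C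
  obtain ⟨a, ha⟩ := violates n
  have hCn : C ≤ (v n).1 := hn.trans (by
    exact_mod_cast (strictMono_nat_of_lt_succ fun m => (spread m _ m.lt_succ_self).1).id_le n)
  have sum_σ : ∑ k ∈ (v n).2.1, a k • y (σ k) = ∑ k ∈ (v n).2.1, a k • y ((v n).2.2 k) :=
    Finset.sum_congr rfl fun k hk => by rw [hσv n hk]
  refine ha.not_ge (sum_σ ▸ (hC (v n).2.1 a).trans ?_)
  gcongr

end SymmetricConst

section DualLatticeBound

theorem sum_abs_le_two_mul {ι : Type*} {s : Finset ι} {c : ι → ℝ} {B : ℝ}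
    (h : ∀ t ⊆ s, |∑ k ∈ t, c k| ≤ B) : ∑ k ∈ s, |c k| ≤ 2 * B := by
  classical
  have hpos : ∑ k ∈ s with 0 ≤ c k, |c k| ≤ B := by
    rw [Finset.sum_congr rfl fun k hk => abs_of_nonneg (Finset.mem_filter.1 hk).2]
    exact (le_abs_self _).trans (h _ (Finset.filter_subset _ _))
  have hneg : ∑ k ∈ s with ¬0 ≤ c k, |c k| ≤ B := by
    rw [Finset.sum_congr rfl fun k hk => abs_of_neg (not_le.1 (Finset.mem_filter.1 hk).2),
      Finset.sum_neg_distrib]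
    exact (neg_le_abs _).trans (h _ (Finset.filter_subset _ _))
  linarith [Finset.sum_filter_add_sum_filter_not s (fun k => 0 ≤ c k) fun k => |c k|]

variable {Y : Type*} [NormedAddCommGroup Y] [NormedSpace ℝ Y] {y : ℕ → Y} {M C : ℝ}

/-- Moving the terms with index in `t` beyond `s` and subtracting leaves the sum over `t`, followed
by terms of large index. -/
theorem HasBasisConst.norm_sum_le_of_subset (hM : HasBasisConst y M) (hC : HasSymmetricConst y C)
    {s t : Finset ℕ} (hts : t ⊆ s) (a : ℕ → ℝ) :
    ‖∑ k ∈ t, a k • y k‖ ≤ M * (1 + C) * ‖∑ k ∈ s, a k • y k‖ := by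
  obtain ⟨n, hn⟩ := s.exists_nat_subset_range
  have lt_n {k} (hk : k ∈ s) : k < n := Finset.mem_range.1 (hn hk)
  obtain ⟨g, hg⟩ := exists_perm_eqOn (s := s) (f := fun k => if k ∈ t then k + n else k)
    fun i hi k hk hik => by grind
  let shifted := t.map (addRightEmbedding n)
  let b (k : ℕ) : ℝ := if k < n then a k else -a (k - n)
  have n_le {k} (hk : k ∈ shifted) : n ≤ k := by
    obtain ⟨i, -, rfl⟩ := Finset.mem_map.1 hk
    exact Nat.le_add_left n i
  have filter_lt : (t ∪ shifted).filter (· < n) = t := by grind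
  have sum_t : ∑ k ∈ t, b k • y k = ∑ k ∈ t, a k • y k :=
    Finset.sum_congr rfl fun k hk => by simp only [b, if_pos (lt_n (hts hk))]
  have sum_shifted : ∑ k ∈ shifted, b k • y k = -∑ k ∈ t, a k • y (k + n) := by
    simp [shifted, b]
  have sum_union : ∑ k ∈ t ∪ shifted, b k • y k = ∑ k ∈ s, a k • y k - ∑ k ∈ s, a k • y (g k) := by
    rw [Finset.sum_union (Finset.disjoint_left.2 fun k hk hk' =>
        (lt_n (hts hk)).not_ge (n_le hk')), sum_t, sum_shifted, ← sub_eq_add_neg,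
      ← Finset.sum_sub_distrib, ← Finset.sum_sub_distrib]
    refine (Finset.sum_congr rfl fun k hk => by simp [hg (hts hk), hk]).trans
      (Finset.sum_subset hts fun k hk hkt => by simp [hg hk, hkt])
  calc ‖∑ k ∈ t, a k • y k‖ = ‖∑ k ∈ t ∪ shifted with k < n, b k • y k‖ := by
        rw [filter_lt, sum_t]
    _ ≤ M * ‖∑ k ∈ s, a k • y k - ∑ k ∈ s, a k • y (g k)‖ := sum_union ▸ hM.2 _ b n
    _ ≤ M * ((1 + C) * ‖∑ k ∈ s, a k • y k‖) := by
        refine mul_le_mul_of_nonneg_left ?_ hM.1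
        linarith [norm_sub_le (∑ k ∈ s, a k • y k) (∑ k ∈ s, a k • y (g k)), hC.2 s a g]
    _ = _ := by ring

/-- The coordinates `f (yₖ)` of functionals on the span of `y` have the properties of the dual of a
space with a symmetric norm: up to the factor `K`, absolute values may be put on the coordinates
of a vector and of a functional, and the latter may be permuted. -/
def HasDualLatticeBound {ι : Type*} (y : ι → Y) (K : ℝ) : Prop :=
  ∀ (s : Finset ι) (a : ι → ℝ) (g : Equiv.Perm ι) (f : StrongDual ℝ Y), ‖f‖ ≤ 1 →
    ∑ k ∈ s, |a k| * |f (y (g k))| ≤ K * ‖∑ k ∈ s, a k • y k‖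

theorem HasBasisConst.hasDualLatticeBound (hM : HasBasisConst y M) (hC : HasSymmetricConst y C) :
    HasDualLatticeBound y (2 * (C * (M * (1 + C)))) := by
  intro s a g f hf
  rw [mul_assoc]
  simp only [← abs_mul]
  refine sum_abs_le_two_mul fun t hts => ?_
  calc |∑ k ∈ t, a k * f (y (g k))| = ‖f (∑ k ∈ t, a k • y (g k))‖ := by
        simp [Real.norm_eq_abs]
    _ ≤ ‖∑ k ∈ t, a k • y (g k)‖ := f.le_of_opNorm_le_of_le hf le_rfl |>.trans_eq (one_mul _)
    _ ≤ C * ‖∑ k ∈ t, a k • y k‖ := hC.2 t a g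
    _ ≤ C * (M * (1 + C) * ‖∑ k ∈ s, a k • y k‖) :=
        mul_le_mul_of_nonneg_left (hM.norm_sum_le_of_subset hC hts a) hC.1
    _ = _ := by ring

theorem IsSymmetricBasicSeq.exists_hasDualLatticeBound [CompleteSpace Y]
    (hy : IsSymmetricBasicSeq y) (hnorm : ∀ k, ‖y k‖ = 1) : ∃ K, HasDualLatticeBound y K := by
  obtain ⟨M, hM⟩ := hy.1.exists_hasBasisConst
  obtain ⟨C, hC⟩ := exists_hasSymmetricConst hnorm
    (fun s a k hk => by simpa [norm_smul, hnorm] using hM.norm_smul_le hk a)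
    fun σ => hy.1.exists_norm_sum_smul_le_of_tendsto fun a ha => ((hy.2 σ).2 a).2 ha
  exact ⟨_, hM.hasDualLatticeBound hC⟩

/-- Averaging the dual lattice bound over the cyclic shifts of `s` decouples `a` from `f`. -/
theorem HasDualLatticeBound.sum_mul_sum_le {ι : Type*} {y : ι → Y} {K : ℝ}
    (hK : HasDualLatticeBound y K) (s : Finset ι) (a : ι → ℝ) (g : Equiv.Perm ι)
    {f : StrongDual ℝ Y} (hf : ‖f‖ ≤ 1) :
    (∑ k ∈ s, |a k|) * ∑ k ∈ s, |f (y (g k))| ≤ s.card * (K * ‖∑ k ∈ s, a k • y k‖) := by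
  obtain ⟨σ, hσ, -⟩ := s.countable_toSet.exists_cycleOn
  calc (∑ k ∈ s, |a k|) * ∑ k ∈ s, |f (y (g k))|
      = ∑ m ∈ Finset.range s.card, ∑ k ∈ s, |a k| * |f (y (g ((σ ^ m) k)))| :=
        Finset.sum_mul_sum_eq_sum_perm hσ (fun k => |a k|) fun k => |f (y (g k))|
    _ ≤ ∑ _m ∈ Finset.range s.card, K * ‖∑ k ∈ s, a k • y k‖ :=
        Finset.sum_le_sum fun m _ => hK s a (g * σ ^ m) f hf
    _ = s.card * (K * ‖∑ k ∈ s, a k • y k‖) := by simp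

theorem HasDualLatticeBound.exists_sum_abs_apply_le {K ε : ℝ} (hK : HasDualLatticeBound y K)
    (hl1 : ¬EquivL1UnitBasis y) (hε : 0 < ε) :
    ∃ N > 0, ∀ (g : Equiv.Perm ℕ) (f : StrongDual ℝ Y), ‖f‖ ≤ 1 →
      ∑ k ∈ Finset.range N, |f (y (g k))| ≤ ε * N := by
  have hc : 0 < ε / (|K| + 1) := by positivity
  obtain ⟨N, a, ha⟩ : ∃ (N : ℕ) (a : ℕ → ℝ), ‖∑ k ∈ Finset.range N, a k • y k‖ <
      ε / (|K| + 1) * ∑ k ∈ Finset.range N, |a k| := by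
    by_contra! h
    exact hl1 ⟨_, hc, h⟩
  have sum_pos : 0 < ∑ k ∈ Finset.range N, |a k| :=
    pos_of_mul_pos_right ((norm_nonneg _).trans_lt ha) hc.le
  have norm_le : K * ‖∑ k ∈ Finset.range N, a k • y k‖ ≤ ε * ∑ k ∈ Finset.range N, |a k| :=
    calc K * ‖∑ k ∈ Finset.range N, a k • y k‖
        ≤ (|K| + 1) * (ε / (|K| + 1) * ∑ k ∈ Finset.range N, |a k|) := by
          gcongr
          linarith [le_abs_self K]
      _ = ε * ∑ k ∈ Finset.range N, |a k| := by field_simp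
  refine ⟨N, Nat.pos_of_ne_zero fun hN => by simp [hN] at sum_pos, fun g f hf => ?_⟩
  refine le_of_mul_le_mul_left ?_ sum_pos
  calc (∑ k ∈ Finset.range N, |a k|) * ∑ k ∈ Finset.range N, |f (y (g k))|
      ≤ N * (K * ‖∑ k ∈ Finset.range N, a k • y k‖) := by
        simpa using hK.sum_mul_sum_le (Finset.range N) a g hf
    _ ≤ N * (ε * ∑ k ∈ Finset.range N, |a k|) := by gcongr
    _ = (∑ k ∈ Finset.range N, |a k|) * (ε * N) := by ring

end DualLatticeBound

section AveragingWeight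

/-- The sum over `j` of the uniform probability distributions on `{0, …, N j - 1}`. -/
noncomputable def averagingWeight (N : ℕ → ℕ) (k : ℕ) : ℝ :=
  ∑' j, if k < N j then (N j : ℝ)⁻¹ else 0

variable {N : ℕ → ℕ}

theorem summable_ite_lt_inv (hN : Summable fun j => (N j : ℝ)⁻¹) (k : ℕ) :
    Summable fun j => if k < N j then (N j : ℝ)⁻¹ else 0 :=
  hN.of_nonneg_of_le (fun j => by positivity) fun j => by
    split_ifs <;> simp

theorem antitone_averagingWeight (hN : Summable fun j => (N j : ℝ)⁻¹) :
    Antitone (averagingWeight N) := fun i k hik =>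
  (summable_ite_lt_inv hN k).tsum_le_tsum (fun j => by
    split_ifs <;> first | positivity | exact le_rfl | lia)
    (summable_ite_lt_inv hN i)

theorem tendsto_averagingWeight (hN : Summable fun j => (N j : ℝ)⁻¹) :
    Tendsto (averagingWeight N) atTop (𝓝 0) := by
  have htendsto (j : ℕ) :
      Tendsto (fun k => if k < N j then (N j : ℝ)⁻¹ else 0) atTop (𝓝 0) :=
    tendsto_const_nhds.congr' ((eventually_ge_atTop (N j)).mono fun k hk =>
      (if_neg hk.not_gt).symm)
  rw [← tsum_zero (β := ℕ)]
  refine tendsto_tsum_of_dominated_convergence hN htendsto (Eventually.of_forall fun k j => ?_)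
  split_ifs <;> simp

theorem not_summable_averagingWeight (hN : Summable fun j => (N j : ℝ)⁻¹) (hpos : ∀ j, 0 < N j) :
    ¬Summable (averagingWeight N) := fun hsum => by
  have hasSum_uniform (j : ℕ) : HasSum (fun k => if k < N j then (N j : ℝ)⁻¹ else 0) 1 := by
    have : HasSum (fun k => if k < N j then (N j : ℝ)⁻¹ else 0)
        (∑ k ∈ Finset.range (N j), if k < N j then (N j : ℝ)⁻¹ else 0) :=
      hasSum_sum_of_ne_finset_zero fun k hk => if_neg (Finset.mem_range.not.1 hk)
    rwa [Finset.sum_congr rfl fun k hk => if_pos (Finset.mem_range.1 hk), Finset.sum_const,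
      Finset.card_range, nsmul_eq_mul, mul_inv_cancel₀ (mod_cast (hpos j).ne')] at this
  obtain ⟨m, hm⟩ := exists_nat_gt (∑' k, averagingWeight N k)
  refine hm.not_ge (hasSum_le (fun k => ?_) (by
    simpa using hasSum_sum fun j (_ : j ∈ Finset.range m) => hasSum_uniform j) hsum.hasSum)
  exact (summable_ite_lt_inv hN k).sum_le_tsum _ fun j _ => by positivity

theorem sum_averagingWeight_mul_le (hN : Summable fun j => (N j : ℝ)⁻¹) (hpos : ∀ j, 0 < N j)
    {ε b : ℕ → ℝ} (hε : Summable ε) (hb : ∀ k, 0 ≤ b k)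
    (h : ∀ j, ∑ k ∈ Finset.range (N j), b k ≤ ε j * N j) (n : ℕ) :
    ∑ k ∈ Finset.range n, averagingWeight N k * b k ≤ ∑' j, ε j := by
  refine hasSum_le (fun j => ?_)
    (hasSum_sum fun k _ => (summable_ite_lt_inv hN k).hasSum.mul_right (b k)) hε.hasSum
  calc ∑ k ∈ Finset.range n, (if k < N j then (N j : ℝ)⁻¹ else 0) * b k
      = (N j : ℝ)⁻¹ * ∑ k ∈ Finset.range n with k < N j, b k := by
        simp only [ite_mul, zero_mul, ← Finset.sum_filter, Finset.mul_sum]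
    _ ≤ (N j : ℝ)⁻¹ * (ε j * N j) := by
        gcongr
        refine (Finset.sum_le_sum_of_subset_of_nonneg (fun k hk => ?_) fun k _ _ => hb k).trans
          (h j)
        exact Finset.mem_range.2 (Finset.mem_filter.1 hk).2
    _ = ε j := by
        have : (N j : ℝ) ≠ 0 := mod_cast (hpos j).ne'
        field_simp

theorem admissible_div {v : ℕ → ℝ} (hv : Antitone v) (h0 : Tendsto v atTop (𝓝 0))
    (hsum : ¬Summable v) : Admissible fun k => v k / v 0 := by
  have nonneg (k : ℕ) : 0 ≤ v k := hv.le_of_tendsto h0 k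
  have pos (k : ℕ) : 0 < v k := (nonneg k).lt_of_ne fun hk => hsum <|
    summable_of_hasFiniteSupport <| (Set.finite_Iio k).subset fun i hi => by
      by_contra hki
      exact hi (le_antisymm (hk ▸ hv (not_lt.1 hki)) (nonneg i))
  refine ⟨fun k => div_pos (pos k) (pos 0), fun k => ?_, div_self (pos 0).ne', ?_, fun h => hsum ?_⟩
  · exact div_le_div_of_nonneg_right (hv k.le_succ) (pos 0).le
  · simpa using h0.div_const (v 0)
  · simpa [div_mul_cancel₀ _ (pos 0).ne'] using h.mul_right (v 0)

end AveragingWeight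

section LorentzBound

variable {Y : Type*} [NormedAddCommGroup Y] [NormedSpace ℝ Y] {y : ℕ → Y}

/-- For every `f` in the dual unit ball, `(f (yₖ))` lies in the ball of radius `C` of the Lorentz
sequence space `d(w, 1)`, whose dual norm is that of `d_*(w)`. The supremum over the injections
`ℕ → ℕ` in the norm of `d(w, 1)` is replaced by one over permutations and finite partial sums. -/
def HasLorentzBound (w : ℕ → ℝ) (y : ℕ → Y) (C : ℝ) : Prop :=
  ∀ f : StrongDual ℝ Y, ‖f‖ ≤ 1 → ∀ (g : Equiv.Perm ℕ) (n : ℕ),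
    ∑ k ∈ Finset.range n, w k * |f (y (g k))| ≤ C

theorem HasDualLatticeBound.exists_hasLorentzBound {K : ℝ} (hK : HasDualLatticeBound y K)
    (hnorm : ∀ k, ‖y k‖ = 1) (hl1 : ¬EquivL1UnitBasis y) :
    ∃ w, Admissible w ∧ ∃ C, HasLorentzBound w y C := by
  choose N hpos hN using fun j : ℕ =>
    hK.exists_sum_abs_apply_le hl1 (ε := (1 / 2) ^ j) (by positivity)
  have inv_le (j : ℕ) : (N j : ℝ)⁻¹ ≤ (1 / 2) ^ j := by
    obtain ⟨f, hf, hfy⟩ := exists_dual_vector'' ℝ (y 0)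
    rw [inv_le_iff_one_le_mul₀ (mod_cast hpos j)]
    calc (1 : ℝ) = |f (y (Equiv.refl ℕ 0))| := by simp [hfy, hnorm]
      _ ≤ ∑ k ∈ Finset.range (N j), |f (y (Equiv.refl ℕ k))| :=
          Finset.single_le_sum (f := fun k => |f (y (Equiv.refl ℕ k))|) (fun _ _ => abs_nonneg _)
            (Finset.mem_range.2 (hpos j))
      _ ≤ (1 / 2) ^ j * N j := hN j (Equiv.refl ℕ) f hf
  have summable_inv : Summable fun j => (N j : ℝ)⁻¹ :=
    summable_geometric_two.of_nonneg_of_le (fun j => by positivity) inv_le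
  have hw := admissible_div (antitone_averagingWeight summable_inv)
    (tendsto_averagingWeight summable_inv) (not_summable_averagingWeight summable_inv hpos)
  have weight_zero_nonneg : 0 ≤ averagingWeight N 0 := tsum_nonneg fun j => by positivity
  refine ⟨_, hw, 2 / averagingWeight N 0, fun f hf g n => ?_⟩
  simp only [div_mul_eq_mul_div, ← Finset.sum_div]
  refine div_le_div_of_nonneg_right ?_ weight_zero_nonneg
  exact tsum_geometric_two ▸ sum_averagingWeight_mul_le summable_inv hpos summable_geometric_two
    (fun k => abs_nonneg _) (fun j => hN j g f hf) n

end LorentzBound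

section DecreasingRearrangement

theorem exists_perm_antitoneOn (s : Finset ℕ) (b : ℕ → ℝ) :
    ∃ g : Equiv.Perm ℕ, (Finset.range s.card).map g.toEmbedding = s ∧
      AntitoneOn (b ∘ g) (Set.Iio s.card) := by
  let e : Fin s.card ≃ s := (Tuple.sort fun i => -b (s.equivFin.symm i)).trans s.equivFin.symm
  have antitone_e : Antitone fun i => b (e i) := fun i k hik =>
    neg_le_neg_iff.1 (Tuple.monotone_sort (fun i => -b (s.equivFin.symm i)) hik)
  obtain ⟨g, hg⟩ := exists_perm_eqOn (s := Finset.range s.card)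
    (f := fun k => if hk : k < s.card then e ⟨k, hk⟩ else 0) fun i hi k hk hik => by
      rw [Finset.mem_coe, Finset.mem_range] at hi hk
      simpa [hi, hk, Subtype.ext_iff.symm] using hik
  have g_apply (i : Fin s.card) : g i = e i := by
    simpa using hg (Finset.mem_coe.2 (Finset.mem_range.2 i.2))
  refine ⟨g, Finset.eq_of_subset_of_card_le (fun x hx => ?_) (by simp), fun i hi k hk hik => ?_⟩
  · obtain ⟨k, hk, rfl⟩ := Finset.mem_map.1 hx
    exact g_apply ⟨k, Finset.mem_range.1 hk⟩ ▸ (e _).2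
  · simpa only [Function.comp_apply, g_apply ⟨i, hi⟩, g_apply ⟨k, hk⟩] using
      antitone_e (Fin.mk_le_mk.2 hik : (⟨i, hi⟩ : Fin s.card) ≤ ⟨k, hk⟩)

theorem sum_range_mul_nonneg_of_antitoneOn {d b : ℕ → ℝ} {n : ℕ} (hb : AntitoneOn b (Set.Iio n))
    (hb0 : ∀ k, 0 ≤ b k) (hd : ∀ m ≤ n, 0 ≤ ∑ k ∈ Finset.range m, d k) :
    0 ≤ ∑ k ∈ Finset.range n, b k * d k := by
  simp only [← smul_eq_mul]
  rw [Finset.sum_range_by_parts, sub_nonneg]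
  refine (Finset.sum_nonpos fun k hk => ?_).trans (smul_nonneg (hb0 _) (hd n le_rfl))
  have hkn : k + 1 < n := by grind
  exact smul_nonpos_of_nonpos_of_nonneg
    (sub_nonpos.2 (hb (k.lt_succ_self.trans hkn) hkn k.le_succ)) (hd _ hkn.le)

theorem sum_mul_le_sum_mul_of_antitoneOn {b c d : ℕ → ℝ} {n : ℕ} (hb : AntitoneOn b (Set.Iio n))
    (hb0 : ∀ k, 0 ≤ b k)
    (hcd : ∀ m ≤ n, ∑ k ∈ Finset.range m, c k ≤ ∑ k ∈ Finset.range m, d k) :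
    ∑ k ∈ Finset.range n, c k * b k ≤ ∑ k ∈ Finset.range n, d k * b k := by
  have := sum_range_mul_nonneg_of_antitoneOn (d := d - c) hb hb0 fun m hm => by
    simpa [Finset.sum_sub_distrib] using hcd m hm
  simpa [mul_sub, Finset.sum_sub_distrib, mul_comm] using this

end DecreasingRearrangement

section DStar

variable {w x : ℕ → ℝ}

theorem sum_abs_le_rearrSum (hx : Tendsto x atTop (𝓝 0)) (A : Finset ℕ) :
    ∑ k ∈ A, |x k| ≤ rearrSum x A.card := by
  obtain ⟨B, hB⟩ := hx.abs.bddAbove_range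
  refine le_csSup ⟨A.card * B, ?_⟩ ⟨A, rfl, rfl⟩
  rintro _ ⟨A', hA', rfl⟩
  calc ∑ k ∈ A', |x k| ≤ A'.card • B := Finset.sum_le_card_nsmul _ _ _ fun k _ => hB ⟨k, rfl⟩
    _ = A.card * B := by rw [nsmul_eq_mul, show A'.card = A.card from hA']

theorem Admissible.sum_range_card_pos (hw : Admissible w) {A : Finset ℕ} (hA : A.Nonempty) :
    0 < ∑ k ∈ Finset.range A.card, w k :=
  Finset.sum_pos (fun k _ => hw.1 k) (Finset.nonempty_range_iff.2 hA.card_ne_zero)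

theorem Admissible.one_le_sum_range_card (hw : Admissible w) {A : Finset ℕ} (hA : A.Nonempty) :
    1 ≤ ∑ k ∈ Finset.range A.card, w k :=
  hw.2.2.1 ▸ Finset.single_le_sum (fun k _ => (hw.1 k).le) (Finset.mem_range.2 hA.card_pos)

theorem sum_abs_le_dStarNorm_mul (hw : Admissible w) (hx : x ∈ dStarSet w) (A : Finset ℕ) :
    ∑ k ∈ A, |x k| ≤ dStarNorm w x * ∑ k ∈ Finset.range A.card, w k := by
  obtain rfl | hA := A.eq_empty_or_nonempty
  · simp
  rw [← div_le_iff₀ (hw.sum_range_card_pos hA)]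
  calc (∑ k ∈ A, |x k|) / ∑ k ∈ Finset.range A.card, w k
      ≤ rearrSum x A.card / ∑ k ∈ Finset.range A.card, w k :=
        div_le_div_of_nonneg_right (sum_abs_le_rearrSum hx.1 A) (hw.sum_range_card_pos hA).le
    _ ≤ dStarNorm w x := le_ciSup hx.2.bddAbove_range A.card

/-- Large sets are controlled by the decay of `rearrSum x n / ∑ k ∈ Finset.range n, w k`, small sets
by `x ∈ c₀` and `w 0 = 1`. -/
theorem exists_forall_disjoint_sum_abs_le (hw : Admissible w) (hx : x ∈ dStarSet w) {ε : ℝ}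
    (hε : 0 < ε) : ∃ m, ∀ A : Finset ℕ, Disjoint A (Finset.range m) →
      ∑ k ∈ A, |x k| ≤ ε * ∑ k ∈ Finset.range A.card, w k := by
  obtain ⟨N, hN⟩ := (hx.2.eventually_le_const hε).exists_forall_of_atTop
  have abs_tendsto : Tendsto (fun k => |x k|) atTop (𝓝 0) := by simpa using hx.1.abs
  obtain ⟨m, hm⟩ := (abs_tendsto.eventually_le_const
    (show 0 < ε / (N + 1) by positivity)).exists_forall_of_atTop
  refine ⟨m, fun A hAm => ?_⟩
  obtain rfl | hA := A.eq_empty_or_nonempty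
  · simp
  obtain hNA | hAN := le_total N A.card
  · calc ∑ k ∈ A, |x k| ≤ rearrSum x A.card := sum_abs_le_rearrSum hx.1 A
      _ ≤ ε * ∑ k ∈ Finset.range A.card, w k :=
        (div_le_iff₀ (hw.sum_range_card_pos hA)).1 (hN _ hNA)
  · calc ∑ k ∈ A, |x k| ≤ A.card • (ε / (N + 1)) :=
          Finset.sum_le_card_nsmul _ _ _ fun k hk =>
            hm k (by simpa using Finset.disjoint_left.1 hAm hk)
      _ ≤ (N + 1) * (ε / (N + 1)) := by
          rw [nsmul_eq_mul]
          gcongr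
          exact_mod_cast hAN.trans N.le_succ
      _ = ε * 1 := by field_simp
      _ ≤ ε * ∑ k ∈ Finset.range A.card, w k := by
          gcongr
          exact hw.one_le_sum_range_card hA

end DStar

section Operator

variable {Y : Type*} [NormedAddCommGroup Y] [NormedSpace ℝ Y] {y : ℕ → Y} {w : ℕ → ℝ} {C : ℝ}

theorem HasLorentzBound.nonneg (hC : HasLorentzBound w y C) : 0 ≤ C := by
  simpa using hC 0 (by simp) 1 0

/-- A norming functional reduces this to the duality of `d_*(w)` and `d(w, 1)`: pair `|x|`, arranged
in the order in which the coordinates of the functional decrease, with those coordinates and compare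
the partial sums of `|x|` with those of `w`. -/
theorem HasLorentzBound.norm_sum_smul_le (hC : HasLorentzBound w y C) {x : ℕ → ℝ} {R : ℝ}
    (hR : 0 ≤ R) {s : Finset ℕ}
    (hx : ∀ A ⊆ s, ∑ k ∈ A, |x k| ≤ R * ∑ k ∈ Finset.range A.card, w k) :
    ‖∑ k ∈ s, x k • y k‖ ≤ C * R := by
  obtain ⟨f, hf, hfs⟩ := exists_dual_vector'' ℝ (∑ k ∈ s, x k • y k)
  obtain ⟨g, hgs, anti⟩ := exists_perm_antitoneOn s fun k => |f (y k)|
  have partial_sums (m : ℕ) (hm : m ≤ s.card) :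
      ∑ k ∈ Finset.range m, |x (g k)| ≤ ∑ k ∈ Finset.range m, R * w k := by
    have hsub : (Finset.range m).map g.toEmbedding ⊆ s := by
      conv_rhs => rw [← hgs]
      exact Finset.map_subset_map.2 (Finset.range_subset_range.2 hm)
    simpa [Finset.mul_sum] using hx _ hsub
  calc ‖∑ k ∈ s, x k • y k‖ = ∑ k ∈ s, x k * f (y k) := by
        simpa using hfs.symm
    _ ≤ ∑ k ∈ s, |x k| * |f (y k)| :=
        Finset.sum_le_sum fun k _ => (le_abs_self _).trans_eq (abs_mul _ _)
    _ = ∑ k ∈ Finset.range s.card, |x (g k)| * |f (y (g k))| := by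
        conv_lhs => rw [← hgs]
        simp only [Finset.sum_map, Equiv.coe_toEmbedding]
    _ ≤ ∑ k ∈ Finset.range s.card, R * w k * |f (y (g k))| :=
        sum_mul_le_sum_mul_of_antitoneOn anti (fun _ => abs_nonneg _) partial_sums
    _ = R * ∑ k ∈ Finset.range s.card, w k * |f (y (g k))| := by
        simp only [Finset.mul_sum, mul_assoc]
    _ ≤ R * C := mul_le_mul_of_nonneg_left (hC f hf g _) hR
    _ = C * R := mul_comm R C

theorem HasLorentzBound.summable_smul [CompleteSpace Y] (hC : HasLorentzBound w y C)
    (hw : Admissible w) {x : ℕ → ℝ} (hx : x ∈ dStarSet w) : Summable fun k => x k • y k := by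
  rw [summable_iff_vanishing_norm]
  intro ε hε
  have hC0 := hC.nonneg
  obtain ⟨m, hm⟩ := exists_forall_disjoint_sum_abs_le hw hx (ε := ε / (C + 1)) (by positivity)
  refine ⟨Finset.range m, fun t ht => ?_⟩
  calc ‖∑ k ∈ t, x k • y k‖ ≤ C * (ε / (C + 1)) :=
        hC.norm_sum_smul_le (by positivity) fun A hA => hm A (ht.mono_left hA)
    _ < ε := by
        rw [mul_div_assoc', div_lt_iff₀ (by positivity)]
        linarith

theorem IsDStarRep.exists_continuousLinearMap [CompleteSpace Y] {D : Type*} [NormedAddCommGroup D]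
    [NormedSpace ℝ D] {j : D →ₗ[ℝ] (ℕ → ℝ)} (hj : IsDStarRep w D j) (hw : Admissible w)
    (hC : HasLorentzBound w y C) :
    ∃ T : D →L[ℝ] Y, ∀ (n : ℕ) (z : D), j z = Pi.single n 1 → T z = y n := by
  have mem (z : D) : j z ∈ dStarSet w := hj.2.1 ▸ Set.mem_range_self z
  have summable (z : D) := hC.summable_smul hw (mem z)
  let T : D →ₗ[ℝ] Y :=
    { toFun := fun z => ∑' k, j z k • y k
      map_add' := fun z z' => by
        simp only [map_add, Pi.add_apply, add_smul, (summable z).tsum_add (summable z')]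
      map_smul' := fun c z => by
        simp only [map_smul, Pi.smul_apply, smul_assoc, (summable z).tsum_const_smul,
          RingHom.id_apply] }
  refine ⟨T.mkContinuous C fun z => ?_, fun n z hz => ?_⟩
  · refine le_of_tendsto (summable z).hasSum.norm (Eventually.of_forall fun s => ?_)
    exact hC.norm_sum_smul_le (norm_nonneg z) fun A _ =>
      hj.2.2 z ▸ sum_abs_le_dStarNorm_mul hw (mem z) A
  · calc ∑' k, j z k • y k = j z n • y n :=
          tsum_eq_single n fun k hk => by simp [hz, Pi.single_eq_of_ne hk]
      _ = y n := by simp [hz]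

end Operator

/-- if `Y` contains a normalized symmetric basic sequence `(y n)` not
equivalent to the unit vector basis of `ℓ₁`, then there are an admissible sequence `w`
and a bounded linear operator `T : d_*(w) → Y` with `T e_n = y_n` for all `n`, where
`(e_n)` is the unit vector basis of `d_*(w)` (here `d_*(w)` is represented by any Banach
space `D` isometrically identified with it via `j`). -/
theorem exists_dStar_operator_of_symmetric_basic (Y : Type*) [NormedAddCommGroup Y]
    [NormedSpace ℝ Y] [CompleteSpace Y]
    (y : ℕ → Y) (hnorm : ∀ n, ‖y n‖ = 1) (hsym : IsSymmetricBasicSeq y)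
    (hl1 : ¬ EquivL1UnitBasis y) :
    ∃ w : ℕ → ℝ, Admissible w ∧
      ∀ (D : Type) (_ : NormedAddCommGroup D), ∀ (_ : NormedSpace ℝ D)
        (_ : CompleteSpace D) (j : D →ₗ[ℝ] (ℕ → ℝ)), IsDStarRep w D j →
          ∃ T : D →L[ℝ] Y, ∀ (n : ℕ) (x : D),
            j x = (Pi.single n 1 : ℕ → ℝ) → T x = y n := by
  obtain ⟨K, hK⟩ := hsym.exists_hasDualLatticeBound hnorm
  obtain ⟨w, hw, C, hC⟩ := hK.exists_hasLorentzBound hnorm hl1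
  exact ⟨w, hw, fun _ _ _ _ _ hj => hj.exists_continuousLinearMap hw hC⟩
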